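/- arXiv:1609.00922 — 3 statements merged into one kernel-verified Lean document; each statement's English description precedes it below -/
import Mathlib

section
/- Let E be a measurable space, m a σ-finite measure on E, and r : E × E → [0,∞] a measurable function with r(x,y) = r(y,x) for all x,y ∈ E. For a measure λ on E write Rλ(x) = ∫_E r(x,y) λ(dy), and for measurable g : E → [0,∞] write Rg(x) = ∫_E r(x,y) g(y) m(dy). Assume there exists a sequence of measurable functions g_n : E → [0,∞], n ∈ ℕ, such that for every x ∈ E the sequence n ↦ Rg_n(x) is nondecreasing, Rg_n(x) ≤ 1 for all n and x, and Rg_n(x) → 1 as n → ∞ for every x ∈ E. Let μ be a finite measure on E and let ν be a σ-finite measure on E such that Rν(x) ≤ Rμ(x) for m-almost every x ∈ E. Then ν(E) ≤ μ(E); in particular ν is a finite measure. -/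
open MeasureTheory

/-- Duality for a symmetric kernel: `∫ Rg dκ = ∫ g Rκ dm`. -/
theorem lintegral_potential_eq_of_symmetric
    {E : Type*} [MeasurableSpace E] (m κ : Measure E) [SFinite m] [SFinite κ]
    {r : E → E → ENNReal} (hr : Measurable (Function.uncurry r))
    (hsymm : ∀ x y, r x y = r y x) {g : E → ENNReal} (hg : Measurable g) :
    ∫⁻ x, ∫⁻ y, r x y * g y ∂m ∂κ = ∫⁻ y, (∫⁻ x, r y x ∂κ) * g y ∂m := by
  rw [lintegral_lintegral_swap (hr.mul (hg.comp measurable_snd)).aemeasurable]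
  refine lintegral_congr fun y => ?_
  simp_rw [fun x => hsymm x y]
  exact lintegral_mul_const _ (hr.comp measurable_prodMk_left)

/-- Comparison lemma (Lemma 4.2 of the paper): let `r : E × E → [0,∞]` be a
symmetric measurable kernel, and suppose there is a sequence of measurable
functions `g n : E → [0,∞]` whose potentials `Rg_n(x) = ∫ r(x,y) g_n(y) m(dy)`
are nondecreasing in `n`, bounded by `1`, and converge to `1` at every `x`.
If `μ` is a finite measure, `ν` is σ-finite, and the potential
`Rν(x) = ∫ r(x,y) ν(dy)` is dominated by `Rμ(x)` for `m`-a.e. `x`, then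
`ν(E) ≤ μ(E)`; in particular `ν` is a finite measure. -/
theorem comparison_of_potentials_measure
    {E : Type*} [MeasurableSpace E]
    (m : Measure E) [SigmaFinite m]
    (r : E → E → ENNReal)
    (hr : Measurable (Function.uncurry r))
    (hsymm : ∀ x y, r x y = r y x)
    (g : ℕ → E → ENNReal) (hg : ∀ n, Measurable (g n))
    (hmono : ∀ x, Monotone fun n => ∫⁻ y, r x y * g n y ∂m)
    (hle : ∀ n x, (∫⁻ y, r x y * g n y ∂m) ≤ 1)
    (hlim : ∀ x, Filter.Tendsto (fun n => ∫⁻ y, r x y * g n y ∂m)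
      Filter.atTop (nhds 1))
    (μ : Measure E) [IsFiniteMeasure μ]
    (ν : Measure E) [SigmaFinite ν]
    (hdom : ∀ᵐ x ∂m, (∫⁻ y, r x y ∂ν) ≤ ∫⁻ y, r x y ∂μ) :
    ν Set.univ ≤ μ Set.univ := by
  have hmeas : ∀ n, Measurable fun x => ∫⁻ y, r x y * g n y ∂m := fun n =>
    (hr.mul ((hg n).comp measurable_snd)).lintegral_prod_right'
  have hbound : ∀ n, ∫⁻ x, ∫⁻ y, r x y * g n y ∂m ∂ν ≤ μ Set.univ := fun n =>
    calc ∫⁻ x, ∫⁻ y, r x y * g n y ∂m ∂ν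
        = ∫⁻ y, (∫⁻ x, r y x ∂ν) * g n y ∂m :=
          lintegral_potential_eq_of_symmetric m ν hr hsymm (hg n)
      _ ≤ ∫⁻ y, (∫⁻ x, r y x ∂μ) * g n y ∂m :=
          lintegral_mono_ae (hdom.mono fun y hy => by gcongr)
      _ = ∫⁻ x, ∫⁻ y, r x y * g n y ∂m ∂μ :=
          (lintegral_potential_eq_of_symmetric m μ hr hsymm (hg n)).symm
      _ ≤ ∫⁻ _, 1 ∂μ := lintegral_mono (hle n)
      _ = μ Set.univ := lintegral_one
  have htendsto := lintegral_tendsto_of_tendsto_of_monotone (μ := ν)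
    (fun n => (hmeas n).aemeasurable) (ae_of_all _ hmono) (ae_of_all _ hlim)
  rw [lintegral_one] at htendsto
  exact le_of_tendsto' htendsto hbound
end

section
/- Let E be a measurable space, m a σ-finite measure on E, and r : E × E → [0,∞] a measurable function with r(x,y) = r(y,x) for all x,y ∈ E. For a measure λ on E write Rλ(x) = ∫_E r(x,y) λ(dy), and for measurable g : E → [0,∞] write Rg(x) = ∫_E r(x,y) g(y) m(dy). Assume there exists a sequence of measurable functions g_n : E → [0,∞], n ∈ ℕ, such that for every x ∈ E the sequence n ↦ Rg_n(x) is nondecreasing, Rg_n(x) ≤ 1 for all n and x, and Rg_n(x) → 1 as n → ∞ for every x ∈ E. Let μ be a finite measure on E and let h : E → [0,∞] be measurable with ∫_E r(x,y) h(y) m(dy) ≤ Rμ(x) for m-almost every x ∈ E. Then ∫_E h dm ≤ μ(E); in particular h belongs to L¹(E;m). -/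
open MeasureTheory

/-- Tonelli's theorem for the potentials of a symmetric kernel:
`∫ Rg dν = ∫ g · Rν dm`. -/
theorem lintegral_potential_eq_lintegral_mul_potential
    {E : Type*} [MeasurableSpace E]
    (m ν : Measure E) [SFinite m] [SFinite ν]
    (r : E → E → ENNReal)
    (hr : Measurable (Function.uncurry r))
    (hsymm : ∀ x y, r x y = r y x)
    (g : E → ENNReal) (hg : Measurable g) :
    ∫⁻ x, ∫⁻ y, r x y * g y ∂m ∂ν = ∫⁻ y, g y * ∫⁻ x, r y x ∂ν ∂m := by
  rw [lintegral_lintegral_swap (hr.mul (hg.comp measurable_snd)).aemeasurable]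
  refine lintegral_congr fun y => ?_
  rw [← lintegral_const_mul _ hr.of_uncurry_left]
  exact lintegral_congr fun x => by rw [hsymm x y, mul_comm]

/-- Special case `ν = h·m` of the comparison lemma (Lemma 4.2 of the paper):
let `r : E × E → [0,∞]` be a symmetric measurable kernel and suppose there is a
sequence of measurable `g n : E → [0,∞]` whose potentials
`Rg_n(x) = ∫ r(x,y) g_n(y) m(dy)` are nondecreasing in `n`, bounded by `1`, and
converge to `1` at every `x`. If `μ` is a finite measure and `h : E → [0,∞]`
is measurable with `∫ r(x,y) h(y) m(dy) ≤ Rμ(x)` for `m`-a.e. `x`, then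
`∫ h dm ≤ μ(E)`; in particular `h ∈ L¹(E;m)`. -/
theorem comparison_of_potentials_function
    {E : Type*} [MeasurableSpace E]
    (m : Measure E) [SigmaFinite m]
    (r : E → E → ENNReal)
    (hr : Measurable (Function.uncurry r))
    (hsymm : ∀ x y, r x y = r y x)
    (g : ℕ → E → ENNReal) (hg : ∀ n, Measurable (g n))
    (hmono : ∀ x, Monotone fun n => ∫⁻ y, r x y * g n y ∂m)
    (hle : ∀ n x, (∫⁻ y, r x y * g n y ∂m) ≤ 1)
    (hlim : ∀ x, Filter.Tendsto (fun n => ∫⁻ y, r x y * g n y ∂m)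
      Filter.atTop (nhds 1))
    (μ : Measure E) [IsFiniteMeasure μ]
    (h : E → ENNReal) (hh : Measurable h)
    (hdom : ∀ᵐ x ∂m, (∫⁻ y, r x y * h y ∂m) ≤ ∫⁻ y, r x y ∂μ) :
    ∫⁻ x, h x ∂m ≤ μ Set.univ := by
  have hpot : ∀ n, Measurable fun x => ∫⁻ y, r x y * g n y ∂m := fun n =>
    (hr.mul ((hg n).comp measurable_snd)).lintegral_prod_right'
  have hbound : ∀ n, ∫⁻ x, h x * ∫⁻ y, r x y * g n y ∂m ∂m ≤ μ Set.univ := fun n =>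
    calc ∫⁻ x, h x * ∫⁻ y, r x y * g n y ∂m ∂m
        = ∫⁻ x, ∫⁻ y, r x y * g n y ∂m ∂(m.withDensity h) :=
          (lintegral_withDensity_eq_lintegral_mul m hh (hpot n)).symm
      _ = ∫⁻ y, g n y * ∫⁻ x, r y x ∂(m.withDensity h) ∂m :=
          lintegral_potential_eq_lintegral_mul_potential m _ r hr hsymm (g n) (hg n)
      _ ≤ ∫⁻ y, g n y * ∫⁻ x, r y x ∂μ ∂m := by
          refine lintegral_mono_ae (hdom.mono fun y hy => ?_)
          refine mul_le_mul_right ?_ (g n y)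
          rw [lintegral_withDensity_eq_lintegral_mul m hh hr.of_uncurry_left]
          simpa only [Pi.mul_apply, mul_comm] using hy
      _ = ∫⁻ x, ∫⁻ y, r x y * g n y ∂m ∂μ :=
          (lintegral_potential_eq_lintegral_mul_potential m μ r hr hsymm (g n) (hg n)).symm
      _ ≤ ∫⁻ _, 1 ∂μ := lintegral_mono (hle n)
      _ = μ Set.univ := lintegral_one
  refine le_of_tendsto' (lintegral_tendsto_of_tendsto_of_monotone
    (fun n => (hh.mul (hpot n)).aemeasurable)
    (ae_of_all m fun x i j hij => mul_le_mul_right (hmono x hij) (h x))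
    (ae_of_all m fun x => ?_)) hbound
  simpa using ENNReal.Tendsto.const_mul (a := h x) (hlim x) (Or.inl one_ne_zero)
end

section
/- Let E be a measurable space, m a σ-finite measure on E, and r : E × E → [0,∞] a measurable function with r(x,y) = r(y,x) for all x,y ∈ E. For a measure λ on E write Rλ(x) = ∫_E r(x,y) λ(dy), and for measurable g : E → [0,∞] write Rg(x) = ∫_E r(x,y) g(y) m(dy). Assume there exists a sequence of measurable functions g_n : E → [0,∞], n ∈ ℕ, such that for every x ∈ E the sequence n ↦ Rg_n(x) is nondecreasing, Rg_n(x) ≤ 1 for all n and x, and Rg_n(x) → 1 as n → ∞ for every x ∈ E. Let μ be a finite measure on E with Rμ(x) < ∞ for m-almost every x ∈ E, let h : E → ℝ be measurable with h(x) ≤ 0 for all x ∈ E and ∫_E r(x,y)|h(y)| m(dy) < ∞ for m-almost every x ∈ E, and let u : E → ℝ be measurable with u(x) = Rμ(x) − ∫_E r(x,y)(−h(y)) m(dy) for m-almost every x ∈ E. If u(x) ≥ 0 for m-almost every x ∈ E, then h ∈ L¹(E;m) and ∫_E |h| dm ≤ μ(E). -/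
open MeasureTheory

/-- Symmetry of the kernel `r` lets one move the potential operator across the pairing. -/
theorem lintegral_potential_comm {E : Type*} [MeasurableSpace E]
    {m ν : Measure E} [SFinite m] [SFinite ν] {r : E → E → ENNReal}
    (hr : Measurable (Function.uncurry r)) (hsymm : ∀ x y, r x y = r y x)
    {g : E → ENNReal} (hg : Measurable g) :
    ∫⁻ x, ∫⁻ y, r x y * g y ∂m ∂ν = ∫⁻ y, (∫⁻ x, r y x ∂ν) * g y ∂m := by
  rw [lintegral_lintegral_swap (hr.mul (hg.comp measurable_snd)).aemeasurable]
  refine lintegral_congr fun y => ?_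
  simp_rw [hsymm _ y]
  exact lintegral_mul_const _ (hr.comp measurable_prodMk_left)

/-- If potentials of functions increase to `1` everywhere, then domination of the potentials
of two measures implies domination of their total masses. -/
theorem measure_univ_le_of_potential_le {E : Type*} [MeasurableSpace E]
    {m ν μ : Measure E} [SFinite m] [SFinite ν] [SFinite μ] {r : E → E → ENNReal}
    (hr : Measurable (Function.uncurry r)) (hsymm : ∀ x y, r x y = r y x)
    {g : ℕ → E → ENNReal} (hg : ∀ n, Measurable (g n))
    (hmono : ∀ x, Monotone fun n => ∫⁻ y, r x y * g n y ∂m)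
    (hlim : ∀ x, Filter.Tendsto (fun n => ∫⁻ y, r x y * g n y ∂m) Filter.atTop (nhds 1))
    (hdom : ∀ᵐ x ∂m, ∫⁻ y, r x y ∂ν ≤ ∫⁻ y, r x y ∂μ) :
    ν Set.univ ≤ μ Set.univ := by
  have hmeas (n : ℕ) : Measurable fun x => ∫⁻ y, r x y * g n y ∂m :=
    (hr.mul ((hg n).comp measurable_snd)).lintegral_prod_right'
  have htendsto : Filter.Tendsto (fun n => ∫⁻ x, ∫⁻ y, r x y * g n y ∂m ∂ν)
      Filter.atTop (nhds (∫⁻ _, 1 ∂ν)) :=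
    lintegral_tendsto_of_tendsto_of_monotone (fun n => (hmeas n).aemeasurable)
      (ae_of_all _ hmono) (ae_of_all _ hlim)
  rw [lintegral_one] at htendsto
  refine le_of_tendsto' htendsto fun n => ?_
  calc ∫⁻ x, ∫⁻ y, r x y * g n y ∂m ∂ν
      = ∫⁻ y, (∫⁻ x, r y x ∂ν) * g n y ∂m := lintegral_potential_comm hr hsymm (hg n)
    _ ≤ ∫⁻ y, (∫⁻ x, r y x ∂μ) * g n y ∂m :=
      lintegral_mono_ae (hdom.mono fun y hy => by gcongr)
    _ = ∫⁻ x, ∫⁻ y, r x y * g n y ∂m ∂μ := (lintegral_potential_comm hr hsymm (hg n)).symm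
    _ ≤ ∫⁻ _, 1 ∂μ :=
      lintegral_mono fun x => (hmono x).ge_of_tendsto (hlim x) n
    _ = μ Set.univ := lintegral_one

/-- Analytic content of Remark (iii), Section 4 of the paper: let
`r : E × E → [0,∞]` be a symmetric measurable kernel admitting a sequence of
measurable `g n : E → [0,∞]` whose potentials `Rg_n(x) = ∫ r(x,y) g_n(y) m(dy)`
are nondecreasing in `n`, bounded by `1`, and converge to `1` at every `x`.
Let `μ` be a finite measure with `Rμ(x) = ∫ r(x,y) μ(dy) < ∞` for `m`-a.e. `x`,
let `h : E → ℝ` be measurable, nonpositive, with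
`∫ r(x,y)|h(y)| m(dy) < ∞` for `m`-a.e. `x`, and let `u : E → ℝ` be measurable
with `u(x) = Rμ(x) − ∫ r(x,y)(−h(y)) m(dy)` for `m`-a.e. `x`. If `u ≥ 0`
`m`-a.e., then `h ∈ L¹(E;m)` and `∫ |h| dm ≤ μ(E)`. -/
theorem nonlinearity_integrable_of_nonneg_solution
    {E : Type*} [MeasurableSpace E]
    (m : Measure E) [SigmaFinite m]
    (r : E → E → ENNReal)
    (hr : Measurable (Function.uncurry r))
    (hsymm : ∀ x y, r x y = r y x)
    (g : ℕ → E → ENNReal) (hg : ∀ n, Measurable (g n))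
    (hmono : ∀ x, Monotone fun n => ∫⁻ y, r x y * g n y ∂m)
    (hle : ∀ n x, (∫⁻ y, r x y * g n y ∂m) ≤ 1)
    (hlim : ∀ x, Filter.Tendsto (fun n => ∫⁻ y, r x y * g n y ∂m)
      Filter.atTop (nhds 1))
    (μ : Measure E) [IsFiniteMeasure μ]
    (hμfin : ∀ᵐ x ∂m, (∫⁻ y, r x y ∂μ) < ⊤)
    (h : E → ℝ) (hhmeas : Measurable h) (hhneg : ∀ x, h x ≤ 0)
    (hhfin : ∀ᵐ x ∂m, (∫⁻ y, r x y * ENNReal.ofReal |h y| ∂m) < ⊤)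
    (u : E → ℝ) (humeas : Measurable u)
    (hu : ∀ᵐ x ∂m, u x = (∫⁻ y, r x y ∂μ).toReal
        - (∫⁻ y, r x y * ENNReal.ofReal (-h y) ∂m).toReal)
    (hpos : ∀ᵐ x ∂m, 0 ≤ u x) :
    Integrable h m ∧ ∫ x, |h x| ∂m ≤ (μ Set.univ).toReal := by
  have habs (x : E) : |h x| = -h x := abs_of_nonpos (hhneg x)
  simp_rw [habs] at hhfin
  have hf : Measurable fun y => ENNReal.ofReal (-h y) := hhmeas.neg.ennreal_ofReal
  have hdom : ∀ᵐ x ∂m, ∫⁻ y, r x y ∂(m.withDensity fun y => ENNReal.ofReal (-h y)) ≤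
      ∫⁻ y, r x y ∂μ := by
    filter_upwards [hμfin, hhfin, hu, hpos] with x hμx hhx hux hx
    have hrx : Measurable fun y => r x y := hr.comp measurable_prodMk_left
    rw [lintegral_withDensity_eq_lintegral_mul _ hf hrx,
      mul_comm (fun y => ENNReal.ofReal (-h y))]
    exact (ENNReal.toReal_le_toReal hhx.ne hμx.ne).1 (sub_nonneg.1 (hux ▸ hx))
  have hmass := measure_univ_le_of_potential_le hr hsymm hg hmono hlim hdom
  rw [withDensity_apply _ MeasurableSet.univ, setLIntegral_univ] at hmass
  have hneg : ∀ᵐ x ∂m, 0 ≤ -h x := ae_of_all _ fun x => neg_nonneg.2 (hhneg x)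
  have hfin := hmass.trans_lt (measure_lt_top μ Set.univ)
  refine ⟨integrable_neg_iff.1 ⟨hhmeas.neg.aestronglyMeasurable,
    (hasFiniteIntegral_iff_ofReal hneg).2 hfin⟩, ?_⟩
  simp_rw [habs]
  rw [integral_eq_lintegral_of_nonneg_ae hneg hhmeas.neg.aestronglyMeasurable]
  exact ENNReal.toReal_mono (measure_ne_top μ _) hmass
end
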